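/- Let u : ℝ² → ℝ be a harmonic function on ℝ² such that there exists a constant C with u(x) ≤ C + C·log(1 + |x|) for all x ∈ ℝ². Then u is constant. -/

import Mathlib

/-- The Laplacian of a function `u : ℝ² ≅ ℂ → ℝ`. -/
noncomputable def lap (u : ℂ → ℝ) (x : ℂ) : ℝ :=
  fderiv ℝ (fun y => fderiv ℝ u y 1) x 1 +
    fderiv ℝ (fun y => fderiv ℝ u y Complex.I) x Complex.I

/-!
A harmonic function on the plane is the real part of an entire function `f`. The
Borel–Carathéodory inequality bounds `‖f z - f 0‖` on the disc of radius `R` by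
`2 M ‖z‖ / (R - ‖z‖)` whenever `M > 0` is an upper bound of `Re (f - f 0)` there. If `M` can be
chosen to be `o(R)` along a sequence of radii `R → ∞`, as a logarithmic bound permits, then
`f z = f 0`.
-/

section

open Asymptotics Filter InnerProductSpace Metric Set
open scoped Laplacian Topology

section Growth

variable {E : Type*} [SeminormedAddCommGroup E] {u : E → ℝ}

/-- The one-sided growth condition `liminf_{R → ∞} R⁻¹ sup_{‖x‖ < R} u x ≤ 0`, under which
Liouville's theorem holds. It is spelled out with `ε` because real suprema and lower limits take
junk values on unbounded functions. -/
def SublinearAbove (u : E → ℝ) : Prop :=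
  ∀ ε > 0, ∃ᶠ R in atTop, ∀ x ∈ ball (0 : E) R, u x ≤ ε * R

theorem SublinearAbove.sub_const (hu : SublinearAbove u) (a : ℝ) :
    SublinearAbove fun x => u x - a := by
  intro ε hε
  have ha : ∀ᶠ R : ℝ in atTop, -a ≤ ε / 2 * R :=
    (tendsto_id.const_mul_atTop (half_pos hε)).eventually_ge_atTop (-a)
  refine ((hu (ε / 2) (half_pos hε)).and_eventually ha).mono fun R ⟨hR, haR⟩ x hx => ?_
  linarith [hR x hx, haR]

theorem sublinearAbove_of_le_comp_norm {g : ℝ → ℝ} (hg : MonotoneOn g (Ici 0))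
    (hgo : g =o[atTop] fun R => R) (hug : ∀ x, u x ≤ g ‖x‖) : SublinearAbove u := by
  intro ε hε
  refine Eventually.frequently ?_
  filter_upwards [hgo.bound hε, eventually_ge_atTop 0] with R hgR hR x hx
  have hxR : ‖x‖ ≤ R := (mem_ball_zero_iff.1 hx).le
  calc u x ≤ g ‖x‖ := hug x
    _ ≤ g R := hg (norm_nonneg x) hR hxR
    _ ≤ ‖g R‖ := Real.le_norm_self _
    _ ≤ ε * R := by rwa [Real.norm_of_nonneg hR] at hgR

theorem isLittleO_const_add_const_mul_log_one_add (A B : ℝ) :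
    (fun R => A + B * Real.log (1 + R)) =o[atTop] fun R : ℝ => R := by
  have hconst (a : ℝ) : (fun _ : ℝ => a) =o[atTop] fun R : ℝ => R := isLittleO_const_id_atTop a
  have hlog : (fun R => Real.log (1 + R)) =o[atTop] fun R : ℝ => 1 + R :=
    Real.isLittleO_log_id_atTop.comp_tendsto (tendsto_atTop_add_const_left atTop 1 tendsto_id)
  have hshift : (fun R : ℝ => 1 + R) =O[atTop] fun R => R :=
    (hconst 1).isBigO.add (isBigO_refl _ _)
  exact (hconst A).add ((hlog.trans_isBigO hshift).const_mul_left B)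

theorem sublinearAbove_of_le_log {A B : ℝ}
    (hu : ∀ x, u x ≤ A + B * Real.log (1 + ‖x‖)) : SublinearAbove u := by
  have hmono : MonotoneOn (fun R => A + |B| * Real.log (1 + R)) (Ici 0) := by
    intro r (hr : 0 ≤ r) R _ hrR
    dsimp only
    gcongr
  refine sublinearAbove_of_le_comp_norm hmono
    (isLittleO_const_add_const_mul_log_one_add A |B|) fun x => (hu x).trans ?_
  have hlog : 0 ≤ Real.log (1 + ‖x‖) := Real.log_nonneg (by simp)
  gcongr
  exact le_abs_self B

end Growth

theorem eq_zero_of_sublinearAbove_re {f : ℂ → ℂ} (hf : Differentiable ℂ f) (hf₀ : f 0 = 0)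
    (hre : SublinearAbove fun z => (f z).re) (z : ℂ) : f z = 0 := by
  have hbound : ∀ ε > 0, ‖f z‖ ≤ 4 * ‖z‖ * ε := by
    intro ε hε
    obtain ⟨R, hreR, hzR, hR⟩ := ((hre ε hε).and_eventually
      ((eventually_ge_atTop (2 * ‖z‖)).and (eventually_gt_atTop 0))).exists
    have hz : z ∈ ball 0 R := mem_ball_zero_iff.2 (by linarith)
    calc ‖f z‖ ≤ 2 * (ε * R) * ‖z‖ / (R - ‖z‖) :=
          Complex.borelCaratheodory_zero (mul_pos hε hR) hf.differentiableOn hreR hR hz hf₀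
      _ ≤ 2 * (ε * R) * ‖z‖ / (R / 2) := by
          gcongr
          linarith
      _ = 4 * ‖z‖ * ε := by
          field_simp
          ring
  have hlim : Tendsto (fun ε : ℝ => 4 * ‖z‖ * ε) (𝓝[>] 0) (𝓝 0) :=
    (Continuous.tendsto' (by fun_prop) 0 0 (mul_zero _)).mono_left nhdsWithin_le_nhds
  exact norm_le_zero_iff.1 (ge_of_tendsto hlim (eventually_mem_nhdsWithin.mono hbound))

theorem apply_eq_apply_of_sublinearAbove_re {f : ℂ → ℂ} (hf : Differentiable ℂ f)
    (hre : SublinearAbove fun z => (f z).re) (z w : ℂ) : f z = f w := by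
  have heq_zero (x : ℂ) : f x - f 0 = 0 :=
    eq_zero_of_sublinearAbove_re (hf.sub_const (f 0)) (sub_self _) (hre.sub_const (f 0).re) x
  exact (sub_eq_zero.1 (heq_zero z)).trans (sub_eq_zero.1 (heq_zero w)).symm

theorem lap_eq_laplacian {u : ℂ → ℝ} {x : ℂ} (hu : ContDiffAt ℝ 2 u x) : lap u x = Δ u x := by
  have hd : DifferentiableAt ℝ (fderiv ℝ u) x :=
    (hu.fderiv_right (m := 1) (by norm_num)).differentiableAt one_ne_zero
  have hsecond (v : ℂ) :
      fderiv ℝ (fun y => fderiv ℝ u y v) x v = fderiv ℝ (fderiv ℝ u) x v v := by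
    simp [fderiv_clm_apply hd (differentiableAt_const v)]
  simp only [lap, hsecond, laplacian_eq_iteratedFDeriv_complexPlane, iteratedFDeriv_two_apply,
    Matrix.cons_val_zero, Matrix.cons_val_one]

theorem harmonicOnNhd_univ_of_lap_eq_zero {u : ℂ → ℝ} (hu : ContDiff ℝ 2 u)
    (hlap : ∀ x, lap u x = 0) : HarmonicOnNhd u univ := by
  have hlaplacian (x : ℂ) : Δ u x = 0 := (lap_eq_laplacian hu.contDiffAt).symm.trans (hlap x)
  exact fun _ _ => ⟨hu.contDiffAt, Eventually.of_forall hlaplacian⟩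

theorem stmt_3_general {u : ℂ → ℝ} (hu : HarmonicOnNhd u univ) (hgrowth : SublinearAbove u) :
    ∃ c : ℝ, ∀ x, u x = c := by
  obtain ⟨f, hf, rfl⟩ := hu.exists_analyticOnNhd_univ_re_eq
  have hf_entire : Differentiable ℂ f := fun z => (hf z (mem_univ z)).differentiableAt
  exact ⟨(f 0).re, fun x =>
    congrArg Complex.re (apply_eq_apply_of_sublinearAbove_re hf_entire hgrowth x 0)⟩

end

/-- A harmonic function on `ℝ²` bounded above by `C + C log(1+|x|)` is constant. -/
theorem stmt_3 (u : ℂ → ℝ) (hu : ContDiff ℝ 2 u) (hharm : ∀ x, lap u x = 0)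
    (C : ℝ) (hgrowth : ∀ x, u x ≤ C + C * Real.log (1 + ‖x‖)) :
    ∃ c : ℝ, ∀ x, u x = c :=
  stmt_3_general (harmonicOnNhd_univ_of_lap_eq_zero hu hharm) (sublinearAbove_of_le_log hgrowth)
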